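/- Let λ, μ ∈ ℝ with μ > 0 and λ + 2μ > 0, let ω > 0, R > 0, set k_p = ω/√(λ + 2μ) and k_s = ω/√μ, and let n ∈ ℕ. Let P : ℝ² ∖ {0} → ℂ² be given by P(x) = 2 J_n'(k_p‖x‖) w(x)^n ν(x) + (2 i n J_n(k_p‖x‖)/(k_p‖x‖)) w(x)^n t(x). Then for every x with ‖x‖ = R, the traction ∂_ν P(x) = λ(∇·P)(x) ν(x) + 2μ (∇^s P)(x) ν(x) equals γ₃ w(x)^n ν(x) + γ₄ w(x)^n t(x), where γ₃ = (2 μ/(k_p R²)) ( (2n² − k_s² R²) J_n(k_p R) − 2 k_p R J_n'(k_p R) ) and γ₄ = (4 i n μ/(k_p R²)) ( k_p R J_n'(k_p R) − J_n(k_p R) ). -/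

import Mathlib

/-!
The field `P` is `2/k_p` times the gradient of `J_n(k_p r) w^n`, so its traction involves `J_n`, `J_n'`
and `J_n''`, and `J_n''` is eliminated by Bessel's differential equation.

Bessel's equation is `hasDerivAt_deriv_besselJ`. It comes from writing `J_n(s) = (s/2)^n g_n(s²/4)`
with the entire function `g_n` of `besselAux`, for which `g_n' = -g_{n+1}` and
`g_n(z) = (n+1) g_{n+1}(z) - z g_{n+2}(z)`; these give `J_n' = (n/s) J_n - J_{n+1}` and the
three-term recurrence.

The geometric part is `traction_of_profiles`: a field `w^n (α(r) x + β(r) x^⊥)` is differentiated in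
Cartesian coordinates from the partial derivatives of `x₁`, `x₂`, `w^n` and radial functions, and
`x₁² + x₂² = R²` collapses the result to polar form. Taking `α = 2 J_n'(k_p r)/r` and
`β = 2 i n J_n(k_p r)/(k_p r²)` and using `μ k_s² = (λ + 2μ) k_p²` gives the stated coefficients.
-/


/-- Euclidean norm on `ℝ²` (represented as `ℝ × ℝ`). -/
noncomputable def r2 (x : ℝ × ℝ) : ℝ := Real.sqrt (x.1 ^ 2 + x.2 ^ 2)

/-- `w(x) = (x₁ + i x₂)/|x| = e^{iθ_x}` on `ℝ² ∖ {0}`. -/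
noncomputable def wc (x : ℝ × ℝ) : ℂ := ((x.1 : ℂ) + Complex.I * (x.2 : ℂ)) / (r2 x : ℂ)

/-- Bessel function of the first kind of (nonnegative integer) order `n`:
`J_n(s) = Σ_{m=0}^∞ (-1)^m/(m!(m+n)!) (s/2)^{2m+n}`. -/
noncomputable def besselJ (n : ℕ) (s : ℝ) : ℝ :=
  ∑' m : ℕ, ((-1 : ℝ) ^ m / ((m.factorial : ℝ) * ((m + n).factorial : ℝ))) *
    (s / 2) ^ (2 * m + n)

/-- First partial derivative `∂₁u` of a scalar field on `ℝ²`. -/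
noncomputable def pd1 (u : ℝ × ℝ → ℂ) (x : ℝ × ℝ) : ℂ := fderiv ℝ u x (1, 0)

/-- Second partial derivative `∂₂u` of a scalar field on `ℝ²`. -/
noncomputable def pd2 (u : ℝ × ℝ → ℂ) (x : ℝ × ℝ) : ℂ := fderiv ℝ u x (0, 1)

/-! ### Bessel functions -/

/-- The entire function `Σ (-1)^m z^m / (m! (m+n)!)`, so that `J_n(s) = (s/2)^n g_n(s²/4)`. -/
noncomputable def besselAux (n : ℕ) (z : ℝ) : ℝ :=
  ∑' m : ℕ, ((-1 : ℝ) ^ m / ((m.factorial : ℝ) * ((m + n).factorial : ℝ))) * z ^ m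

lemma abs_besselCoeff_le (n m : ℕ) :
    |(-1 : ℝ) ^ m / ((m.factorial : ℝ) * ((m + n).factorial : ℝ))| ≤ 1 / (m.factorial : ℝ) := by
  rw [abs_div, abs_pow, abs_neg, abs_one, one_pow, abs_of_pos (by positivity)]
  have h1 : (1 : ℝ) ≤ ((m + n).factorial : ℝ) := by exact_mod_cast Nat.factorial_pos _
  have h0 : (0 : ℝ) < (m.factorial : ℝ) := by positivity
  apply one_div_le_one_div_of_le h0
  nlinarith

lemma summable_besselAux (n : ℕ) (z : ℝ) :
    Summable fun m : ℕ =>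
      ((-1 : ℝ) ^ m / ((m.factorial : ℝ) * ((m + n).factorial : ℝ))) * z ^ m := by
  refine Summable.of_norm_bounded (Real.summable_pow_div_factorial |z|) fun m => ?_
  rw [Real.norm_eq_abs, abs_mul, abs_pow, ← one_div_mul_eq_div (m.factorial : ℝ)]
  exact mul_le_mul_of_nonneg_right (abs_besselCoeff_le n m) (by positivity)

/-- Termwise differentiation shifts the order: `g_n' = -g_{n+1}`. -/
lemma hasDerivAt_besselAux (n : ℕ) (z : ℝ) :
    HasDerivAt (besselAux n) (-besselAux (n + 1) z) z := by
  set ρ : ℝ := |z| + 1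
  have hρ : 0 < ρ := by positivity
  -- Summable majorant of the derived series on the ball of radius `ρ`.
  have hu : Summable fun m : ℕ => (1 / (m.factorial : ℝ)) * (m * ρ ^ (m - 1)) := by
    rw [← summable_nat_add_iff 1]
    refine (Real.summable_pow_div_factorial ρ).congr fun m => ?_
    rw [Nat.factorial_succ]
    push_cast
    field_simp
  have hz : z ∈ Metric.ball (0 : ℝ) ρ := by simp [ρ]
  have key := hasDerivAt_tsum_of_isPreconnected (𝕜 := ℝ) (F := ℝ) hu Metric.isOpen_ball
    (convex_ball (0 : ℝ) ρ).isPreconnected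
    (g := fun (m : ℕ) (y : ℝ) =>
      ((-1 : ℝ) ^ m / ((m.factorial : ℝ) * ((m + n).factorial : ℝ))) * y ^ m)
    (g' := fun (m : ℕ) (y : ℝ) =>
      ((-1 : ℝ) ^ m / ((m.factorial : ℝ) * ((m + n).factorial : ℝ))) * (m * y ^ (m - 1)))
    (fun m y _ => (hasDerivAt_pow m y).const_mul _)
    (fun m y hy => by
      rw [Real.norm_eq_abs, abs_mul, abs_mul, abs_pow, Nat.abs_cast]
      have hy' : |y| ≤ ρ := by simpa using (mem_ball_zero_iff.mp hy).le
      have := abs_besselCoeff_le n m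
      gcongr)
    hz (summable_besselAux n z) hz
  have hsum : Summable fun m : ℕ =>
      ((-1 : ℝ) ^ m / ((m.factorial : ℝ) * ((m + n).factorial : ℝ))) * (m * z ^ (m - 1)) := by
    refine Summable.of_norm_bounded hu fun m => ?_
    rw [Real.norm_eq_abs, abs_mul, abs_mul, abs_pow, Nat.abs_cast]
    have hy' : |z| ≤ ρ := by simp [ρ]
    have := abs_besselCoeff_le n m
    gcongr
  have e : -besselAux (n + 1) z = ∑' m : ℕ,
      ((-1 : ℝ) ^ m / ((m.factorial : ℝ) * ((m + n).factorial : ℝ))) * (m * z ^ (m - 1)) := by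
    rw [hsum.tsum_eq_zero_add, besselAux, ← tsum_neg]
    simp only [Nat.cast_zero, zero_mul, mul_zero, zero_add]
    refine tsum_congr fun m => ?_
    rw [Nat.factorial_succ, show m + 1 + n = m + (n + 1) by ring, pow_succ]
    push_cast
    field_simp
  rw [e]
  exact key

/-- Comparison of coefficients of `z ^ m`, using `n + 1 + m` as the ratio of `(m+n+1)!` to
`(m+n)!`. -/
lemma besselAux_recurrence (n : ℕ) (z : ℝ) :
    besselAux n z = (n + 1) * besselAux (n + 1) z - z * besselAux (n + 2) z := by
  have h0 := summable_besselAux n z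
  have h1 := (summable_besselAux (n + 1) z).mul_left ((n : ℝ) + 1)
  have h2 := (summable_besselAux (n + 2) z).mul_left z
  have h1' := (summable_nat_add_iff 1).mpr h1
  simp only [besselAux]
  rw [← tsum_mul_left, ← tsum_mul_left, h0.tsum_eq_zero_add, h1.tsum_eq_zero_add, add_sub_assoc,
    ← h1'.tsum_sub h2]
  congr 1
  · rw [show 0 + (n + 1) = (0 + n) + 1 by ring, Nat.factorial_succ]
    push_cast
    simp only [zero_add]
    field_simp
  · refine tsum_congr fun m => ?_
    rw [show m + 1 + (n + 1) = (m + 1 + n) + 1 by ring, show m + (n + 2) = (m + 1 + n) + 1 by ring,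
      Nat.factorial_succ (m + 1 + n), Nat.factorial_succ m]
    push_cast
    field_simp
    ring

lemma besselJ_eq_besselAux (n : ℕ) (s : ℝ) :
    besselJ n s = (s / 2) ^ n * besselAux n (s ^ 2 / 4) := by
  rw [besselJ, besselAux, ← tsum_mul_left]
  refine tsum_congr fun m => ?_
  rw [show s ^ 2 / 4 = (s / 2) ^ 2 by ring, ← pow_mul, pow_add]
  ring

/-- The three-term recurrence in the order; it turns the second application of the lowering
relation into Bessel's equation. -/
lemma besselJ_recurrence (n : ℕ) {s : ℝ} (hs : s ≠ 0) :
    besselJ n s + besselJ (n + 2) s = 2 * (n + 1) / s * besselJ (n + 1) s := by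
  simp only [besselJ_eq_besselAux]
  rw [besselAux_recurrence n]
  simp only [pow_add]
  field_simp
  ring

/-- The lowering relation `J_n' = (n/s) J_n - J_{n+1}`. -/
lemma hasDerivAt_besselJ (n : ℕ) {s : ℝ} (hs : s ≠ 0) :
    HasDerivAt (besselJ n) (n / s * besselJ n s - besselJ (n + 1) s) s := by
  have e : besselJ n = fun s => (s / 2) ^ n * besselAux n (s ^ 2 / 4) :=
    funext (besselJ_eq_besselAux n)
  have h1 : HasDerivAt (fun s : ℝ => (s / 2) ^ n) (n * (s / 2) ^ (n - 1) * (1 / 2)) s :=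
    ((hasDerivAt_id s).div_const 2).pow n
  have h2 : HasDerivAt (fun s : ℝ => s ^ 2 / 4) (s / 2) s := by
    refine ((hasDerivAt_pow 2 s).div_const 4).congr_deriv ?_
    norm_num
    ring
  have h3 := h1.mul ((hasDerivAt_besselAux n (s ^ 2 / 4)).comp s h2)
  refine (h3.congr_of_eventuallyEq (.of_eq e)).congr_deriv ?_
  simp only [besselJ_eq_besselAux, Function.comp]
  rcases n with _ | n
  · simp; ring
  · simp only [Nat.add_sub_cancel, pow_succ]
    field_simp
    ring

/-- Bessel's differential equation, as a formula for the second derivative. -/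
lemma hasDerivAt_deriv_besselJ (n : ℕ) {s : ℝ} (hs : s ≠ 0) :
    HasDerivAt (deriv (besselJ n))
      (-(deriv (besselJ n) s) / s - (1 - n ^ 2 / s ^ 2) * besselJ n s) s := by
  have hev : deriv (besselJ n) =ᶠ[nhds s] fun y => n / y * besselJ n y - besselJ (n + 1) y := by
    filter_upwards [isOpen_ne.mem_nhds hs] with y hy
    exact (hasDerivAt_besselJ n hy).deriv
  have h := (((hasDerivAt_const s (n : ℝ)).div (hasDerivAt_id s) hs).mul
    (hasDerivAt_besselJ n hs)).sub (hasDerivAt_besselJ (n + 1) hs)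
  refine (h.congr_of_eventuallyEq hev).congr_deriv ?_
  have hr : besselJ (n + 1 + 1) s = 2 * (n + 1) / s * besselJ (n + 1) s - besselJ n s := by
    rw [← besselJ_recurrence n hs]; ring
  rw [(hasDerivAt_besselJ n hs).deriv, hr]
  simp only [id, Pi.div_apply]
  push_cast
  field_simp
  ring

/-! ### Partial derivatives in polar quantities -/

/-- `u` is differentiable at `x` with partial derivatives `a` and `b`. -/
def HasPD (u : ℝ × ℝ → ℂ) (a b : ℂ) (x : ℝ × ℝ) : Prop :=
  HasFDerivAt u ((ContinuousLinearMap.fst ℝ ℝ ℝ).smulRight a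
    + (ContinuousLinearMap.snd ℝ ℝ ℝ).smulRight b) x

namespace HasPD

variable {u v : ℝ × ℝ → ℂ} {a b a' b' : ℂ} {x : ℝ × ℝ}

lemma pd1_eq (h : HasPD u a b x) : pd1 u x = a := by
  rw [pd1, HasFDerivAt.fderiv h]; simp

lemma pd2_eq (h : HasPD u a b x) : pd2 u x = b := by
  rw [pd2, HasFDerivAt.fderiv h]; simp

lemma add (hu : HasPD u a b x) (hv : HasPD v a' b' x) :
    HasPD (fun y => u y + v y) (a + a') (b + b') x := by
  refine (HasFDerivAt.add hu hv).congr_fderiv ?_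
  ext <;> simp

lemma sub (hu : HasPD u a b x) (hv : HasPD v a' b' x) :
    HasPD (fun y => u y - v y) (a - a') (b - b') x := by
  refine (HasFDerivAt.sub hu hv).congr_fderiv ?_
  ext <;> simp

lemma mul (hu : HasPD u a b x) (hv : HasPD v a' b' x) :
    HasPD (fun y => u y * v y) (u x * a' + v x * a) (u x * b' + v x * b) x := by
  refine (HasFDerivAt.mul hu hv).congr_fderiv ?_
  ext <;> simp

end HasPD

lemma hasPD_fst (x : ℝ × ℝ) : HasPD (fun y => (y.1 : ℂ)) 1 0 x := by
  refine (Complex.ofRealCLM.hasFDerivAt.comp x hasFDerivAt_fst).congr_fderiv ?_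
  ext <;> simp

lemma hasPD_snd (x : ℝ × ℝ) : HasPD (fun y => (y.2 : ℂ)) 0 1 x := by
  refine (Complex.ofRealCLM.hasFDerivAt.comp x hasFDerivAt_snd).congr_fderiv ?_
  ext <;> simp

lemma hasPD_const (c : ℂ) (x : ℝ × ℝ) : HasPD (fun _ => c) 0 0 x := by
  refine (hasFDerivAt_const c x).congr_fderiv ?_
  ext <;> simp

lemma sq_r2 (x : ℝ × ℝ) : r2 x ^ 2 = x.1 ^ 2 + x.2 ^ 2 :=
  Real.sq_sqrt (by positivity)

lemma hasFDerivAt_r2 {x : ℝ × ℝ} (hx : 0 < r2 x) :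
    HasFDerivAt r2 ((x.1 / r2 x) • ContinuousLinearMap.fst ℝ ℝ ℝ
      + (x.2 / r2 x) • ContinuousLinearMap.snd ℝ ℝ ℝ) x := by
  have hne : x.1 ^ 2 + x.2 ^ 2 ≠ 0 := by
    rw [← sq_r2]; positivity
  have h1 : HasFDerivAt (fun y : ℝ × ℝ => y.1 ^ 2 + y.2 ^ 2) _ x :=
    ((hasFDerivAt_fst (𝕜 := ℝ) (p := x)).pow 2).add ((hasFDerivAt_snd (𝕜 := ℝ) (p := x)).pow 2)
  refine (h1.sqrt hne).congr_fderiv ?_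
  change _ = (x.1 / r2 x) • _ + _
  have e : √(x.1 ^ 2 + x.2 ^ 2) = r2 x := rfl
  rw [e]
  ext <;> simp <;> field_simp

/-- Chain rule for radial functions. -/
lemma hasPD_radial {f : ℝ → ℂ} {f' : ℂ} {x : ℝ × ℝ} (hx : 0 < r2 x)
    (hf : HasDerivAt f f' (r2 x)) :
    HasPD (fun y => f (r2 y)) (f' * x.1 / r2 x) (f' * x.2 / r2 x) x := by
  refine (hf.hasFDerivAt.comp x (hasFDerivAt_r2 hx)).congr_fderiv ?_
  ext <;> simp <;> ring

/-- The angular factor satisfies `∇(w^n) = i n w^n ∇θ` with `∇θ = (-x₂, x₁)/r²`. -/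
lemma hasPD_wc_pow (n : ℕ) {x : ℝ × ℝ} (hx : 0 < r2 x) :
    HasPD (fun y => wc y ^ n) (-(Complex.I * n * wc x ^ n * x.2 / r2 x ^ 2))
      (Complex.I * n * wc x ^ n * x.1 / r2 x ^ 2) x := by
  have hr : (r2 x : ℂ) ≠ 0 := by exact_mod_cast hx.ne'
  have hsq : (r2 x : ℂ) ^ 2 = (x.1 : ℂ) ^ 2 + (x.2 : ℂ) ^ 2 := by exact_mod_cast sq_r2 x
  have hinv : HasDerivAt (fun s : ℝ => (s : ℂ)⁻¹) (-1 / (r2 x : ℂ) ^ 2) (r2 x) := by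
    have h := (hasDerivAt_inv hr).scomp (r2 x) Complex.ofRealCLM.hasDerivAt
    refine h.congr_deriv ?_
    simp [div_eq_mul_inv]
  have hw : HasPD wc (-(Complex.I * wc x * x.2 / r2 x ^ 2))
      (Complex.I * wc x * x.1 / r2 x ^ 2) x := by
    have h := ((hasPD_fst x).add ((hasPD_const Complex.I x).mul (hasPD_snd x))).mul
      (hasPD_radial hx hinv)
    have e : wc = fun y => ((y.1 : ℂ) + Complex.I * (y.2 : ℂ)) * (r2 y : ℂ)⁻¹ := by
      funext y; rw [wc, div_eq_mul_inv]
    rw [e]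
    convert h using 1
    · field_simp
      linear_combination (-1 : ℂ) * hsq - (x.2 : ℂ) ^ 2 * Complex.I_sq
    · field_simp
      linear_combination (-Complex.I) * hsq + (x.1 * x.2 : ℂ) * Complex.I_sq
  induction n with
  | zero => simpa using hasPD_const 1 x
  | succ n ih =>
    simp only [pow_succ]
    convert ih.mul hw using 1
    · push_cast; ring
    · push_cast; ring

/-! ### Traction of fields with radial profiles -/

/-- Traction on `‖x‖ = R` of the field `w^n (α(r) x + β(r) x^⊥)` with `x^⊥ = (-x₂, x₁)`, for
arbitrary radial profiles `α`, `β` with derivatives `A'`, `B'` at `R`. The bracket multiplying `λ`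
in `g₃` is the divergence and the one multiplying `2μ` is the radial strain; `g₄` is `2μ` times the
shear strain (all with `w^n` factored out). -/
lemma traction_of_profiles (lam mu R : ℝ) (hR : 0 < R) (n : ℕ) (α β : ℝ → ℂ) (A' B' : ℂ)
    (hα : HasDerivAt α A' R) (hβ : HasDerivAt β B' R) (x : ℝ × ℝ) (hx : r2 x = R)
    (P1 P2 : ℝ × ℝ → ℂ)
    (hP1 : P1 = fun y => wc y ^ n * (α (r2 y) * y.1 - β (r2 y) * y.2))
    (hP2 : P2 = fun y => wc y ^ n * (α (r2 y) * y.2 + β (r2 y) * y.1)) (g₃ g₄ : ℂ)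
    (hg₃ : g₃ = lam * (Complex.I * n * β R + R * A' + 2 * α R) + 2 * mu * (R * A' + α R))
    (hg₄ : g₄ = mu * (Complex.I * n * α R + R * B')) :
    ((lam : ℂ) * (pd1 P1 x + pd2 P2 x) * ((x.1 / R : ℝ) : ℂ)
          + 2 * (mu : ℂ) * (pd1 P1 x * ((x.1 / R : ℝ) : ℂ)
            + (pd2 P1 x + pd1 P2 x) / 2 * ((x.2 / R : ℝ) : ℂ))
        = g₃ * wc x ^ n * ((x.1 / R : ℝ) : ℂ) + g₄ * wc x ^ n * ((-x.2 / R : ℝ) : ℂ))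
      ∧ ((lam : ℂ) * (pd1 P1 x + pd2 P2 x) * ((x.2 / R : ℝ) : ℂ)
          + 2 * (mu : ℂ) * ((pd2 P1 x + pd1 P2 x) / 2 * ((x.1 / R : ℝ) : ℂ)
            + pd2 P2 x * ((x.2 / R : ℝ) : ℂ))
        = g₃ * wc x ^ n * ((x.2 / R : ℝ) : ℂ) + g₄ * wc x ^ n * ((x.1 / R : ℝ) : ℂ)) := by
  have hx0 : 0 < r2 x := hx ▸ hR
  have hRc : (R : ℂ) ≠ 0 := by exact_mod_cast hR.ne'
  have hsq : (R : ℂ) ^ 2 = (x.1 : ℂ) ^ 2 + (x.2 : ℂ) ^ 2 := by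
    rw [← hx]; exact_mod_cast sq_r2 x
  have a := hasPD_radial hx0 (hx.symm ▸ hα)
  have b := hasPD_radial hx0 (hx.symm ▸ hβ)
  have w := hasPD_wc_pow n hx0
  have h1 := w.mul ((a.mul (hasPD_fst x)).sub (b.mul (hasPD_snd x)))
  have h2 := w.mul ((a.mul (hasPD_snd x)).add (b.mul (hasPD_fst x)))
  rw [← hP1] at h1
  rw [← hP2] at h2
  rw [h1.pd1_eq, h1.pd2_eq, h2.pd1_eq, h2.pd2_eq, hg₃, hg₄]
  simp only [Complex.ofReal_div, Complex.ofReal_neg, hx]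
  constructor
  · field_simp
    linear_combination -(wc x ^ n * ((lam + 2 * mu) * x.1 * R * A' + lam * x.1 * β R * Complex.I * n
      - x.2 * R * B' * mu - x.2 * α R * Complex.I * n * mu)) * hsq
  · field_simp
    linear_combination -(wc x ^ n * ((lam + 2 * mu) * x.2 * R * A' + lam * x.2 * β R * Complex.I * n
      + x.1 * R * B' * mu + x.1 * α R * Complex.I * n * mu)) * hsq

/-- Traction of the p-wave field `P_n^i` on the circle `|x| = R`:
`∂_ν P = λ(∇·P)ν + 2μ(∇ˢP)ν = γ₃ e^{inθ}ν + γ₄ e^{inθ}t` with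
`γ₃ = (2μ/(k_p R²))((2n² - k_s²R²) J_n(k_p R) - 2 k_p R J_n'(k_p R))` and
`γ₄ = (4inμ/(k_p R²))(k_p R J_n'(k_p R) - J_n(k_p R))`. -/
theorem stmt13 (lam mu : ℝ) (hmu : 0 < mu) (hconv : 0 < lam + 2 * mu)
    (ω R : ℝ) (hω : 0 < ω) (hR : 0 < R) (n : ℕ) :
    let kp : ℝ := ω / Real.sqrt (lam + 2 * mu)
    let ks : ℝ := ω / Real.sqrt mu
    let P : ℝ × ℝ → ℂ × ℂ := fun x =>
      ((2 * ((deriv (besselJ n) (kp * r2 x) : ℝ) : ℂ)) * wc x ^ n * ((x.1 / r2 x : ℝ) : ℂ)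
         + (2 * Complex.I * (n : ℂ) * (besselJ n (kp * r2 x) : ℂ) / ((kp * r2 x : ℝ) : ℂ))
             * wc x ^ n * ((-x.2 / r2 x : ℝ) : ℂ),
       (2 * ((deriv (besselJ n) (kp * r2 x) : ℝ) : ℂ)) * wc x ^ n * ((x.2 / r2 x : ℝ) : ℂ)
         + (2 * Complex.I * (n : ℂ) * (besselJ n (kp * r2 x) : ℂ) / ((kp * r2 x : ℝ) : ℂ))
             * wc x ^ n * ((x.1 / r2 x : ℝ) : ℂ))
    let P1 : ℝ × ℝ → ℂ := fun x => (P x).1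
    let P2 : ℝ × ℝ → ℂ := fun x => (P x).2
    let divP : ℝ × ℝ → ℂ := fun x => pd1 P1 x + pd2 P2 x
    let s12 : ℝ × ℝ → ℂ := fun x => (pd2 P1 x + pd1 P2 x) / 2
    let γ₃ : ℂ := ((2 * mu / (kp * R ^ 2) : ℝ) : ℂ) *
      (((2 * (n : ℝ) ^ 2 - ks ^ 2 * R ^ 2 : ℝ) : ℂ) * ((besselJ n (kp * R) : ℝ) : ℂ)
        - ((2 * kp * R : ℝ) : ℂ) * ((deriv (besselJ n) (kp * R) : ℝ) : ℂ))
    let γ₄ : ℂ := 4 * Complex.I * (n : ℂ) * (mu : ℂ) / ((kp * R ^ 2 : ℝ) : ℂ) *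
      (((kp * R : ℝ) : ℂ) * ((deriv (besselJ n) (kp * R) : ℝ) : ℂ)
        - ((besselJ n (kp * R) : ℝ) : ℂ))
    ∀ x : ℝ × ℝ, r2 x = R →
      ((lam : ℂ) * divP x * ((x.1 / R : ℝ) : ℂ)
          + 2 * (mu : ℂ) * (pd1 P1 x * ((x.1 / R : ℝ) : ℂ) + s12 x * ((x.2 / R : ℝ) : ℂ))
        = γ₃ * wc x ^ n * ((x.1 / R : ℝ) : ℂ) + γ₄ * wc x ^ n * ((-x.2 / R : ℝ) : ℂ))
      ∧ ((lam : ℂ) * divP x * ((x.2 / R : ℝ) : ℂ)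
          + 2 * (mu : ℂ) * (s12 x * ((x.1 / R : ℝ) : ℂ) + pd2 P2 x * ((x.2 / R : ℝ) : ℂ))
        = γ₃ * wc x ^ n * ((x.2 / R : ℝ) : ℂ) + γ₄ * wc x ^ n * ((x.1 / R : ℝ) : ℂ)) := by
  intro kp ks P P1 P2 divP s12 γ₃ γ₄ x hx
  have hkp : 0 < kp := div_pos hω (Real.sqrt_pos.mpr hconv)
  have hs : kp * R ≠ 0 := (mul_pos hkp hR).ne'
  have hkpc : (kp : ℂ) ≠ 0 := by exact_mod_cast hkp.ne'
  have hRc : (R : ℂ) ≠ 0 := by exact_mod_cast hR.ne'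
  -- Both sides equal `ω²`; this is where `k_s` enters the formula for `γ₃`.
  have hdisp : mu * ks ^ 2 = (lam + 2 * mu) * kp ^ 2 := by
    simp only [ks, kp, div_pow, Real.sq_sqrt hmu.le, Real.sq_sqrt hconv.le]
    rw [mul_div_cancel₀ _ hmu.ne', mul_div_cancel₀ _ hconv.ne']
  have hdispc : (mu : ℂ) * ks ^ 2 = (lam + 2 * mu) * kp ^ 2 := by exact_mod_cast hdisp
  have hlin : HasDerivAt (fun r : ℝ => kp * r) kp R := by
    simpa using (hasDerivAt_id R).const_mul kp
  have hJ : HasDerivAt (fun r : ℝ => ((besselJ n (kp * r) : ℝ) : ℂ))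
      ((deriv (besselJ n) (kp * R) * kp : ℝ) : ℂ) R :=
    ((hasDerivAt_besselJ n hs).differentiableAt.hasDerivAt.comp R hlin).ofReal_comp
  have hJ' : HasDerivAt (fun r : ℝ => ((deriv (besselJ n) (kp * r) : ℝ) : ℂ))
      (((-(deriv (besselJ n) (kp * R)) / (kp * R)
        - (1 - n ^ 2 / (kp * R) ^ 2) * besselJ n (kp * R)) * kp : ℝ) : ℂ) R :=
    ((hasDerivAt_deriv_besselJ n hs).comp R hlin).ofReal_comp
  have hid : HasDerivAt (fun r : ℝ => (r : ℂ)) 1 R := Complex.ofRealCLM.hasDerivAt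
  refine traction_of_profiles lam mu R hR n
    (fun r => 2 * ((deriv (besselJ n) (kp * r) : ℝ) : ℂ) / r)
    (fun r => 2 * Complex.I * n * (besselJ n (kp * r) : ℂ) / (kp * (r : ℂ) ^ 2)) _ _
    ((hJ'.const_mul 2).div hid hRc)
    ((hJ.const_mul (2 * Complex.I * n)).div ((hid.pow 2).const_mul (kp : ℂ)) (mul_ne_zero hkpc (pow_ne_zero 2 hRc)))
    x hx P1 P2 ?_ ?_ γ₃ γ₄ ?_ ?_
  · funext y
    simp only [P1, P]
    push_cast
    ring
  · funext y
    simp only [P2, P]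
    push_cast
    ring
  · simp only [γ₃]
    generalize deriv (besselJ n) (kp * R) = D
    generalize besselJ n (kp * R) = J
    push_cast
    field_simp
    linear_combination (-(R : ℂ) ^ 2 * J) * hdispc - lam * n ^ 2 * J * Complex.I_sq
  · simp only [γ₄]
    generalize deriv (besselJ n) (kp * R) = D
    generalize besselJ n (kp * R) = J
    simp only [Pi.pow_apply]
    push_cast
    field_simp
    ring
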